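/- arXiv:2508.00294 — 7 statements merged into one kernel-verified Lean document; each statement's English description precedes it below -/
import Mathlib

section
/- Hölder's Theorem for ordered real vector spaces: let V be a totally ordered real vector space that is Archimedean, i.e., for all nonzero u, v ∈ V there exists n ∈ ℕ with |v| ≤ (n+1)·|u|, where |x| = max(x, −x). Then there exists an injective ℝ-linear map ψ : V → ℝ such that v ≤ w if and only if ψ(v) ≤ ψ(w) for all v, w ∈ V. -/
/-- Hölder's Theorem for ordered real vector spaces: an Archimedean totally ordered real
vector space admits an injective order-reflecting `ℝ`-linear functional. -/
theorem holder_theorem (V : Type*) [AddCommGroup V] [Module ℝ V] [LinearOrder V]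
    (hcompat : ∀ (α : ℝ), 0 < α → ∀ x y z : V, x ≤ y ↔ α • x + z ≤ α • y + z)
    (harch : ∀ u v : V, u ≠ 0 → v ≠ 0 →
      ∃ n : ℕ, max v (-v) ≤ ((n : ℝ) + 1) • max u (-u)) :
    ∃ ψ : V →ₗ[ℝ] ℝ, Function.Injective ψ ∧ ∀ v w : V, v ≤ w ↔ ψ v ≤ ψ w := by
  have hadd : ∀ x y z : V, x ≤ y → x + z ≤ y + z := fun x y z h => by
    simpa using (hcompat 1 one_pos x y z).1 h
  haveI : IsOrderedAddMonoid V :=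
    { add_le_add_left := fun x y h z => hadd x y z h }
  have hsm : ∀ (α : ℝ), 0 < α → ∀ x y : V, x ≤ y ↔ α • x ≤ α • y := fun α h x y => by
    simpa using hcompat α h x y 0
  by_cases htriv : ∀ v : V, v = 0
  · refine ⟨0, fun v w _ => by rw [htriv v, htriv w], fun v w => ?_⟩
    rw [htriv v, htriv w]
    simp
  push Not at htriv
  obtain ⟨e, he0, he⟩ : ∃ e : V, e ≠ 0 ∧ 0 < e := by
    obtain ⟨u, hu⟩ := htriv
    rcases lt_or_gt_of_ne hu with h | h
    · exact ⟨-u, neg_ne_zero.2 hu, neg_pos.2 h⟩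
    · exact ⟨u, hu, h⟩
  have hmono : ∀ s t : ℝ, s ≤ t → s • e ≤ t • e := fun s t h => by
    rcases h.eq_or_lt with rfl | h
    · exact le_rfl
    have h1 := (hsm (t - s) (sub_pos.2 h) 0 e).1 he.le
    rw [smul_zero, sub_smul] at h1
    exact sub_nonneg.1 h1
  have hiff : ∀ s t : ℝ, s • e ≤ t • e ↔ s ≤ t := fun s t => by
    refine ⟨fun h => ?_, hmono s t⟩
    by_contra hlt
    have heq := le_antisymm h (hmono t s (not_le.1 hlt).le)
    have := smul_left_injective ℝ he0 heq
    exact hlt this.le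
  -- positive elements dominate a positive multiple of e
  have hdom : ∀ w : V, 0 < w → ∃ ε : ℝ, 0 < ε ∧ ε • e ≤ w := fun w hw => by
    obtain ⟨n, hn⟩ := harch w e hw.ne' he0
    have hp : (0 : ℝ) < (n : ℝ) + 1 := by positivity
    refine ⟨((n : ℝ) + 1)⁻¹, inv_pos.2 hp, ?_⟩
    rw [hsm _ hp, smul_smul, mul_inv_cancel₀ hp.ne', one_smul]
    rw [max_eq_left (b := -w) ((neg_neg_of_pos hw).trans hw).le] at hn
    exact (le_max_left _ _).trans hn
  have hrep : ∀ v : V, ∃ t : ℝ, v = t • e := fun v => by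
    by_cases hv : v = 0
    · exact ⟨0, by simp [hv]⟩
    obtain ⟨n, hn⟩ := harch e v he0 hv
    rw [max_eq_left (b := -e) ((neg_neg_of_pos he).trans he).le] at hn
    have hv1 : v ≤ ((n : ℝ) + 1) • e := (le_max_left _ _).trans hn
    have hv2 : (-((n : ℝ) + 1)) • e ≤ v := by
      rw [neg_smul]
      exact neg_le.1 ((le_max_right _ _).trans hn)
    let S : Set ℝ := {t | t • e ≤ v}
    have hne : S.Nonempty := ⟨_, hv2⟩
    have hbdd : BddAbove S := ⟨(n : ℝ) + 1, fun t ht => (hiff _ _).1 (le_trans ht hv1)⟩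
    refine ⟨sSup S, ?_⟩
    rcases lt_trichotomy v (sSup S • e) with h | h | h
    · exfalso
      obtain ⟨ε, hε, h2⟩ := hdom _ (sub_pos.2 h)
      have h3 : v ≤ (sSup S - ε) • e := by
        rw [sub_smul]
        exact le_sub_comm.1 h2
      have : sSup S ≤ sSup S - ε :=
        csSup_le hne fun t ht => (hiff _ _).1 (le_trans ht h3)
      linarith
    · exact h
    · exfalso
      obtain ⟨ε, hε, h2⟩ := hdom _ (sub_pos.2 h)
      have h3 : sSup S + ε ∈ S := by
        change (sSup S + ε) • e ≤ v
        rw [add_smul, add_comm]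
        exact le_sub_iff_add_le.1 h2
      have := le_csSup hbdd h3
      linarith
  choose f hf using hrep
  have hinj := smul_left_injective ℝ he0
  refine ⟨{ toFun := f, map_add' := fun v w => hinj ?_, map_smul' := fun c v => hinj ?_ },
    fun v w h => ?_, fun v w => ?_⟩
  · change f (v + w) • e = (f v + f w) • e
    rw [add_smul, ← hf, ← hf, ← hf]
  · change f (c • v) • e = (c * f v) • e
    rw [mul_smul, ← hf, ← hf]
  · change f v = f w at h
    rw [hf v, hf w, h]
  · change v ≤ w ↔ f v ≤ f w
    rw [← hiff, ← hf, ← hf]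
end

section
/- Let Ω be a set and ≿ a total preorder on Ω (reflexive, transitive, and complete). Then there do not exist n ≥ 1, elements a₁,…,aₙ, b₁,…,bₙ ∈ Ω, and positive reals c₁,…,cₙ such that: (C1) aᵢ ≿ bᵢ for all i; (C2) Σᵢ cᵢ·1_{bᵢ}(ω) ≥ Σᵢ cᵢ·1_{aᵢ}(ω) for all ω ∈ Ω; and (C3|4) either bₖ ̸≿ aₖ for some k, or in addition to (C2) the two functions Σᵢ cᵢ·1_{bᵢ} and Σᵢ cᵢ·1_{aᵢ} are not equal. (In other words, the comparative expectation system of singleton-indicator gambles induced by ≿ is coherent with respect to weak dominance.) -/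
open Classical in
/-- The indicator gamble of a single state. -/
noncomputable def indicator1 {Ω : Type*} (a : Ω) : Ω → ℝ :=
  fun ω => if ω = a then 1 else 0

open Classical in
theorem sum_indicator1_aux {Ω : Type*} {n : ℕ} (a : Fin n → Ω) (c : Fin n → ℝ) (u : Ω → ℝ)
    (S : Finset Ω) (hS : ∀ i, a i ∈ S) :
    ∑ ω ∈ S, u ω * ∑ i, c i * indicator1 (a i) ω = ∑ i, c i * u (a i) := by
  simp_rw [Finset.mul_sum]
  rw [Finset.sum_comm]
  refine Finset.sum_congr rfl fun i _ => ?_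
  rw [Finset.sum_eq_single (a i)]
  · simp [indicator1, mul_comm]
  · intro ω _ h
    simp [indicator1, h]
  · intro h
    exact absurd (hS i) h

/-- The comparative expectation system of singleton-indicator gambles induced by a total
preorder is coherent with respect to weak dominance. -/
theorem singleton_indicator_system_coherent {Ω : Type*} (pref : Ω → Ω → Prop)
    (hrefl : ∀ a, pref a a)
    (htrans : ∀ a b c, pref a b → pref b c → pref a c)
    (htotal : ∀ a b, pref a b ∨ pref b a) :
    ¬ ∃ (n : ℕ) (a b : Fin n → Ω) (c : Fin n → ℝ),
        1 ≤ n ∧ (∀ i, 0 < c i) ∧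
        (∀ i, pref (a i) (b i)) ∧
        (∀ ω, (∑ i, c i * indicator1 (a i) ω) ≤ ∑ i, c i * indicator1 (b i) ω) ∧
        ((∃ k, ¬ pref (b k) (a k)) ∨
          (fun ω => ∑ i, c i * indicator1 (b i) ω) ≠
            (fun ω => ∑ i, c i * indicator1 (a i) ω)) := by
  classical
  rintro ⟨n, a, b, c, -, hc, hab, hle, hor⟩
  let S : Finset Ω := Finset.univ.image a ∪ Finset.univ.image b
  have hSa : ∀ i, a i ∈ S := fun i => by simp [S]
  have hSb : ∀ i, b i ∈ S := fun i => by simp [S]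
  have h1 := sum_indicator1_aux a c (fun _ => 1) S hSa
  have h2 := sum_indicator1_aux b c (fun _ => 1) S hSb
  simp only [one_mul] at h1 h2
  have hS := (Finset.sum_eq_sum_iff_of_le (fun ω (_ : ω ∈ S) => hle ω)).1 (h1.trans h2.symm)
  have heq : ∀ ω, ∑ i, c i * indicator1 (b i) ω = ∑ i, c i * indicator1 (a i) ω := by
    intro ω
    by_cases h : ω ∈ S
    · exact (hS ω h).symm
    · refine Finset.sum_congr rfl fun i _ => ?_
      have ha : ω ≠ a i := fun e => h (e ▸ hSa i)
      have hb : ω ≠ b i := fun e => h (e ▸ hSb i)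
      simp [indicator1, ha, hb]
  rcases hor with ⟨k, hk⟩ | hne
  · let u : Ω → ℝ := fun ω => if pref ω (a k) then 1 else 0
    have h3 := sum_indicator1_aux a c u S hSa
    have h4 := sum_indicator1_aux b c u S hSb
    simp_rw [heq] at h4
    have hlt : ∑ i, c i * u (b i) < ∑ i, c i * u (a i) := by
      refine Finset.sum_lt_sum (fun i _ => ?_) ⟨k, Finset.mem_univ k, ?_⟩
      · refine mul_le_mul_of_nonneg_left ?_ (hc i).le
        by_cases hb : pref (b i) (a k)
        · simp [u, hb, htrans _ _ _ (hab i) hb]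
        · simp only [u, hb, if_false]
          split_ifs <;> norm_num
      · simp [u, hk, hrefl, hc k]
    linarith
  · exact hne (funext heq)
end

section
/- Let Ω = {q ∈ ℚ : q > 0}, let α be a positive irrational real number, and define gambles g₁, g₂ : Ω → ℝ by g₁(q) = −(q+α)/(2αq) if q > α and g₁(q) = (q+α)/(2αq) if q < α, and g₂(q) = 1 if q > α and g₂(q) = −1 if q < α. Let X = {0, g₁, g₂} and let ≿ be the binary relation on X holding exactly for the pairs (0, g₁) and (0, g₂). Then (X, ≿) is ℚ-linearly coherent with respect to weak dominance: there are no n ≥ 1, gambles f₁,…,fₙ, g′₁,…,g′ₙ ∈ X, and positive rationals c₁,…,cₙ such that (C1) fᵢ ≿ g′ᵢ for all i; (C2) Σᵢ cᵢ·g′ᵢ ≥ Σᵢ cᵢ·fᵢ pointwise; and (C3|4) either g′ₖ ̸≿ fₖ for some k, or Σᵢ cᵢ·g′ᵢ weakly dominates Σᵢ cᵢ·fᵢ. -/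
/-- `f` weakly dominates `g`: `g ≤ f` pointwise and `g ≠ f`. -/
def WeaklyDominates {Ω : Type*} (f g : Ω → ℝ) : Prop :=
  (∀ ω, g ω ≤ f ω) ∧ g ≠ f

/-- The comparative expectation system determined by `𝟎 ≻ g₁` and `𝟎 ≻ g₂` on the positive
rationals is `ℚ`-linearly coherent with respect to weak dominance. -/
theorem qlinear_coherent (α : ℝ) (hαpos : 0 < α) (hαirr : Irrational α)
    (g₁ g₂ : {q : ℚ // 0 < q} → ℝ)
    (hg₁gt : ∀ q : {q : ℚ // 0 < q}, α < ((q : ℚ) : ℝ) →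
      g₁ q = -((((q : ℚ) : ℝ) + α) / (2 * α * ((q : ℚ) : ℝ))))
    (hg₁lt : ∀ q : {q : ℚ // 0 < q}, ((q : ℚ) : ℝ) < α →
      g₁ q = (((q : ℚ) : ℝ) + α) / (2 * α * ((q : ℚ) : ℝ)))
    (hg₂gt : ∀ q : {q : ℚ // 0 < q}, α < ((q : ℚ) : ℝ) → g₂ q = 1)
    (hg₂lt : ∀ q : {q : ℚ // 0 < q}, ((q : ℚ) : ℝ) < α → g₂ q = -1)
    (X : Set ({q : ℚ // 0 < q} → ℝ)) (hX : X = {0, g₁, g₂})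
    (pref : ({q : ℚ // 0 < q} → ℝ) → ({q : ℚ // 0 < q} → ℝ) → Prop)
    (hpref : ∀ f g, pref f g ↔ (f = 0 ∧ (g = g₁ ∨ g = g₂))) :
    ¬ ∃ (n : ℕ) (f g : Fin n → ({q : ℚ // 0 < q} → ℝ)) (c : Fin n → ℚ),
        1 ≤ n ∧
        (∀ i, f i ∈ X) ∧ (∀ i, g i ∈ X) ∧ (∀ i, 0 < c i) ∧
        (∀ i, pref (f i) (g i)) ∧
        (∀ ω, (∑ i, (c i : ℝ) * f i ω) ≤ ∑ i, (c i : ℝ) * g i ω) ∧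
        ((∃ k, ¬ pref (g k) (f k)) ∨
          WeaklyDominates (fun ω => ∑ i, (c i : ℝ) * g i ω)
            (fun ω => ∑ i, (c i : ℝ) * f i ω)) := by
  classical
  rintro ⟨n, f, g, c, hn, -, -, hc, hp, hle, -⟩
  obtain ⟨A, B, hA, hB, hAB, hsum⟩ : ∃ A B : ℚ, 0 ≤ A ∧ 0 ≤ B ∧ 0 < A + B ∧
      ∀ ω, ∑ i, (c i : ℝ) * g i ω = (A : ℝ) * g₁ ω + (B : ℝ) * g₂ ω := by
    refine ⟨∑ i, if g i = g₁ then c i else 0, ∑ i, if g i = g₁ then 0 else c i, ?_, ?_, ?_, ?_⟩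
    · refine Finset.sum_nonneg fun i _ => ?_
      have := (hc i).le
      split_ifs <;> simp [this]
    · refine Finset.sum_nonneg fun i _ => ?_
      have := (hc i).le
      split_ifs <;> simp [this]
    · rw [← Finset.sum_add_distrib]
      refine Finset.sum_pos (fun i _ => ?_) ⟨⟨0, hn⟩, Finset.mem_univ _⟩
      have := hc i
      split_ifs <;> simp [this]
    · intro ω
      push_cast
      rw [Finset.sum_mul, Finset.sum_mul, ← Finset.sum_add_distrib]
      refine Finset.sum_congr rfl fun i _ => ?_
      rcases ((hpref _ _).1 (hp i)).2 with h | h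
      · simp [h]
      · by_cases h' : g i = g₁
        · simp [h']
        · simp only [if_neg h']
          rw [h]
          simp
  have h0 : ∀ ω, 0 ≤ (A : ℝ) * g₁ ω + (B : ℝ) * g₂ ω := by
    intro ω
    rw [← hsum]
    refine le_trans (le_of_eq ?_) (hle ω)
    symm
    refine Finset.sum_eq_zero fun i _ => ?_
    simp [((hpref _ _).1 (hp i)).1]
  have hgt : ∀ q : ℚ, α < q → (A : ℝ) * (q + α) ≤ B * (2 * α * q) := by
    intro q hq
    have hq0 : (0 : ℝ) < q := hαpos.trans hq
    have h := h0 ⟨q, by exact_mod_cast hq0⟩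
    rw [hg₁gt _ hq, hg₂gt _ hq] at h
    have h2 : (A : ℝ) * ((q + α) / (2 * α * q)) ≤ B := by
      simp only at h
      linarith
    rwa [← mul_div_assoc, div_le_iff₀ (by positivity)] at h2
  have hlt : ∀ q : ℚ, (0 : ℝ) < q → q < α → B * (2 * α * q) ≤ (A : ℝ) * (q + α) := by
    intro q hq0 hq
    have h := h0 ⟨q, by exact_mod_cast hq0⟩
    rw [hg₁lt _ hq, hg₂lt _ hq] at h
    have h2 : (B : ℝ) ≤ A * ((q + α) / (2 * α * q)) := by
      simp only at h
      linarith
    rwa [← mul_div_assoc, le_div_iff₀ (by positivity)] at h2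
  have hA' : (0 : ℝ) ≤ A := by exact_mod_cast hA
  have hB' : (0 : ℝ) ≤ B := by exact_mod_cast hB
  rcases lt_trichotomy ((A : ℝ)) (α * B) with h | h | h
  · have hd : (0 : ℝ) < 2 * α * B - A := by nlinarith
    have h1 : A * α / (2 * α * B - A) < α := by
      rw [div_lt_iff₀ hd]; nlinarith
    obtain ⟨q, hq1, hq2⟩ := exists_rat_btwn h1
    have hq0 : (0 : ℝ) < q := lt_of_le_of_lt (by positivity) hq1
    have := hlt q hq0 hq2
    rw [div_lt_iff₀ hd] at hq1
    linarith
  · rcases hB.eq_or_lt with hB0 | hB0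
    · subst hB0
      have : A = 0 := by simpa using h
      simp [this] at hAB
    · have hB0' : (B : ℝ) ≠ 0 := by exact_mod_cast hB0.ne'
      refine hαirr ⟨A / B, ?_⟩
      push_cast
      rw [h]; field_simp
  · rcases le_or_gt (2 * α * B - A) 0 with hd | hd
    · obtain ⟨q, hq1⟩ := exists_rat_gt α
      have := hgt q hq1
      have hq0 : (0 : ℝ) < q := hαpos.trans hq1
      have hApos : (0 : ℝ) < A := lt_of_le_of_lt (by positivity) h
      nlinarith [mul_pos hApos hαpos]
    · have h1 : α < A * α / (2 * α * B - A) := by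
        rw [lt_div_iff₀ hd]; nlinarith
      obtain ⟨q, hq1, hq2⟩ := exists_rat_btwn h1
      have := hgt q hq1
      rw [lt_div_iff₀ hd] at hq2
      linarith
end

section
/- Let Ω = {q ∈ ℚ : q > 0}, let α be a positive irrational real number, and define gambles g₁, g₂ : Ω → ℝ by g₁(q) = −(q+α)/(2αq) if q > α and g₁(q) = (q+α)/(2αq) if q < α, and g₂(q) = 1 if q > α and g₂(q) = −1 if q < α. Let X = {0, g₁, g₂} and let ≿ be the binary relation on X holding exactly for the pairs (0, g₁) and (0, g₂). Then (X, ≿) is ℝ-linearly incoherent with respect to simple dominance, so conditions (C1), (C2), and (C4) of simple-dominance coherence are violated: with f₁ = f₂ = 0, c₁ = α, c₂ = 1 we have fᵢ ≿ gᵢ for i = 1, 2, and α·g₁(q) + g₂(q) > 0 = α·f₁(q) + f₂(q) for every q ∈ Ω, hence c₁·g₁ + c₂·g₂ simply dominates c₁·f₁ + c₂·f₂. -/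
/-- `f` simply dominates `g`: `g ω < f ω` for all states `ω`. -/
def SimplyDominates {Ω : Type*} (f g : Ω → ℝ) : Prop :=
  ∀ ω, g ω < f ω

/-- `⊳`-coherence (with real coefficients) of the comparative expectation system. -/
def Coherent {Ω : Type*} (R : (Ω → ℝ) → (Ω → ℝ) → Prop)
    (X : Set (Ω → ℝ)) (pref : (Ω → ℝ) → (Ω → ℝ) → Prop) : Prop :=
  ¬ ∃ (n : ℕ) (f g : Fin n → Ω → ℝ) (c : Fin n → ℝ),
      1 ≤ n ∧
      (∀ i, f i ∈ X) ∧ (∀ i, g i ∈ X) ∧ (∀ i, 0 < c i) ∧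
      (∀ i, pref (f i) (g i)) ∧
      (∀ ω, (∑ i, c i * f i ω) ≤ ∑ i, c i * g i ω) ∧
      ((∃ k, ¬ pref (g k) (f k)) ∨
        R (fun ω => ∑ i, c i * g i ω) (fun ω => ∑ i, c i * f i ω))

/-- The comparative expectation system determined by `𝟎 ≻ g₁` and `𝟎 ≻ g₂` on the positive
rationals is `ℝ`-linearly incoherent with respect to simple dominance, as witnessed by
`f₁ = f₂ = 𝟎`, `c₁ = α`, `c₂ = 1`: one has `𝟎 ≿ g₁`, `𝟎 ≿ g₂`, and `α·g₁ + g₂` exceeds `0`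
at every state, so `α·g₁ + g₂` simply dominates the zero gamble. -/
theorem rlinear_incoherent_simple_dominance (α : ℝ) (hαpos : 0 < α) (hαirr : Irrational α)
    (g₁ g₂ : {q : ℚ // 0 < q} → ℝ)
    (hg₁gt : ∀ q : {q : ℚ // 0 < q}, α < ((q : ℚ) : ℝ) →
      g₁ q = -((((q : ℚ) : ℝ) + α) / (2 * α * ((q : ℚ) : ℝ))))
    (hg₁lt : ∀ q : {q : ℚ // 0 < q}, ((q : ℚ) : ℝ) < α →
      g₁ q = (((q : ℚ) : ℝ) + α) / (2 * α * ((q : ℚ) : ℝ)))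
    (hg₂gt : ∀ q : {q : ℚ // 0 < q}, α < ((q : ℚ) : ℝ) → g₂ q = 1)
    (hg₂lt : ∀ q : {q : ℚ // 0 < q}, ((q : ℚ) : ℝ) < α → g₂ q = -1)
    (X : Set ({q : ℚ // 0 < q} → ℝ)) (hX : X = {0, g₁, g₂})
    (pref : ({q : ℚ // 0 < q} → ℝ) → ({q : ℚ // 0 < q} → ℝ) → Prop)
    (hpref : ∀ f g, pref f g ↔ (f = 0 ∧ (g = g₁ ∨ g = g₂))) :
    pref 0 g₁ ∧ pref 0 g₂ ∧
    (∀ q : {q : ℚ // 0 < q}, 0 < α * g₁ q + g₂ q) ∧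
    SimplyDominates (α • g₁ + g₂) 0 ∧
    ¬ Coherent SimplyDominates X pref := by
  have key : ∀ q : {q : ℚ // 0 < q}, 0 < α * g₁ q + g₂ q := by
    intro q
    have hq : (0 : ℝ) < ((q : ℚ) : ℝ) := by exact_mod_cast q.2
    rcases lt_or_gt_of_ne (hαirr.ne_rat (q : ℚ)) with h | h
    · rw [hg₁gt q h, hg₂gt q h]
      have : α * -((((q : ℚ) : ℝ) + α) / (2 * α * ((q : ℚ) : ℝ))) + 1
          = (((q : ℚ) : ℝ) - α) / (2 * ((q : ℚ) : ℝ)) := by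
        field_simp
        ring
      rw [this]
      exact div_pos (by linarith) (by linarith)
    · rw [hg₁lt q h, hg₂lt q h]
      have : α * ((((q : ℚ) : ℝ) + α) / (2 * α * ((q : ℚ) : ℝ))) + -1
          = (α - ((q : ℚ) : ℝ)) / (2 * ((q : ℚ) : ℝ)) := by
        field_simp
        ring
      rw [this]
      exact div_pos (by linarith) (by linarith)
  have h1 : pref 0 g₁ := (hpref _ _).2 ⟨rfl, Or.inl rfl⟩
  have h2 : pref 0 g₂ := (hpref _ _).2 ⟨rfl, Or.inr rfl⟩
  refine ⟨h1, h2, key, fun q => by simpa using key q, ?_⟩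
  intro hc
  apply hc
  refine ⟨2, ![0, 0], ![g₁, g₂], ![α, 1], by norm_num, ?_, ?_, ?_, ?_, ?_, Or.inr ?_⟩
  · intro i; fin_cases i <;> simp [hX]
  · intro i; fin_cases i <;> simp [hX]
  · intro i; fin_cases i <;> simp [hαpos]
  · intro i; fin_cases i
    · exact h1
    · exact h2
  · intro q
    simpa [Fin.sum_univ_two] using (key q).le
  · intro q
    simpa [Fin.sum_univ_two] using key q
end

section
/- Let Ω be a nonempty set, let L be a linear subspace of ℝ^Ω consisting of bounded gambles and containing all constant gambles, let (L, ≿) be a comparative prevision system, and let ℙ : L → ℝ be a price function for ≿, i.e., for each f ∈ L, f ∼ (constant gamble ℙ(f)). Then (L, ≿) is de Finetti coherent if and only if ℙ satisfies: ℙ(1) = 1; ℙ(r·f + s·g) = r·ℙ(f) + s·ℙ(g) for all r, s ∈ ℝ and f, g ∈ L; ℙ(f) > ℙ(g) whenever f uniformly dominates g; and ℙ represents ≿, i.e., f ≿ g if and only if ℙ(f) ≥ ℙ(g) for all f, g ∈ L. -/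
/-- A gamble is bounded if its range lies in some interval `[-n, n]`. -/
def Bounded {Ω : Type*} (f : Ω → ℝ) : Prop :=
  ∃ n : ℕ, ∀ ω, f ω ∈ Set.Icc (-(n : ℝ)) (n : ℝ)

/-- `f` uniformly dominates `g`: `g + c ≤ f` pointwise for some real `c > 0`. -/
def UniformlyDominates {Ω : Type*} (f g : Ω → ℝ) : Prop :=
  ∃ c : ℝ, 0 < c ∧ ∀ ω, g ω + c ≤ f ω

/-- De Finetti coherence (coherence with respect to uniform dominance) of the comparative
expectation system `(X, pref)`. -/
def DeFinettiCoherent {Ω : Type*} (X : Set (Ω → ℝ))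
    (pref : (Ω → ℝ) → (Ω → ℝ) → Prop) : Prop :=
  ¬ ∃ (n : ℕ) (f g : Fin n → Ω → ℝ) (c : Fin n → ℝ),
      1 ≤ n ∧
      (∀ i, f i ∈ X) ∧ (∀ i, g i ∈ X) ∧ (∀ i, 0 < c i) ∧
      (∀ i, pref (f i) (g i)) ∧
      (∀ ω, (∑ i, c i * f i ω) ≤ ∑ i, c i * g i ω) ∧
      ((∃ k, ¬ pref (g k) (f k)) ∨
        UniformlyDominates (fun ω => ∑ i, c i * g i ω) (fun ω => ∑ i, c i * f i ω))

/-- A comparative prevision system: all gambles bounded, the relation complete, and every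
gamble indifferent to some constant gamble in the system. -/
def IsComparativePrevisionSystem {Ω : Type*} (X : Set (Ω → ℝ))
    (pref : (Ω → ℝ) → (Ω → ℝ) → Prop) : Prop :=
  (∀ f ∈ X, Bounded f) ∧
  (∀ f g : Ω → ℝ, f ∈ X → g ∈ X → pref f g ∨ pref g f) ∧
  (∀ f ∈ X, ∃ p : ℝ, (fun _ => p) ∈ X ∧ pref f (fun _ => p) ∧ pref (fun _ => p) f)

/-- A comparative prevision system on a linear space of bounded gambles containing all
constants is de Finetti coherent iff its price function is a real-valued finitely additive
expectation representing the preference. -/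
theorem deFinetti_coherent_iff_price_is_expectation {Ω : Type*} [Nonempty Ω]
    (L : Submodule ℝ (Ω → ℝ))
    (hbdd : ∀ f : Ω → ℝ, f ∈ L → Bounded f)
    (hconst : ∀ c : ℝ, (fun _ => c) ∈ L)
    (pref : (Ω → ℝ) → (Ω → ℝ) → Prop)
    (hcomplete : ∀ f g : Ω → ℝ, f ∈ L → g ∈ L → pref f g ∨ pref g f)
    (P : (Ω → ℝ) → ℝ)
    (hprice : ∀ f : Ω → ℝ, f ∈ L →
      pref f (fun _ => P f) ∧ pref (fun _ => P f) f) :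
    DeFinettiCoherent (L : Set (Ω → ℝ)) pref ↔
      (P (fun _ => 1) = 1 ∧
       (∀ (r s : ℝ) (f g : Ω → ℝ), f ∈ L → g ∈ L →
          P (r • f + s • g) = r * P f + s * P g) ∧
       (∀ f g : Ω → ℝ, f ∈ L → g ∈ L → UniformlyDominates f g → P g < P f) ∧
       (∀ f g : Ω → ℝ, f ∈ L → g ∈ L → (pref f g ↔ P g ≤ P f))) := by
  constructor
  · intro H
    have key : ∀ (a b d : ℝ) (f g h : Ω → ℝ), f ∈ L → g ∈ L → h ∈ L → ∀ δ : ℝ, 0 < δ →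
        (∀ ω, δ ≤ a * (f ω - P f) + b * (g ω - P g) + d * (h ω - P h)) → False := by
      intro a b d f g h hf hg hh δ hδ hω
      have pos : ∀ x : ℝ, 0 < |x| + 1 + x := fun x => by linarith [neg_abs_le x]
      have pos' : ∀ x : ℝ, 0 < |x| + 1 := fun x => by positivity
      refine H ⟨6, ![fun _ => P f, f, fun _ => P g, g, fun _ => P h, h],
        ![f, fun _ => P f, g, fun _ => P g, h, fun _ => P h],
        ![|a| + 1 + a, |a| + 1, |b| + 1 + b, |b| + 1, |d| + 1 + d, |d| + 1],
        by norm_num, ?_, ?_, ?_, ?_, ?_, Or.inr ⟨δ, hδ, ?_⟩⟩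
      · intro i; fin_cases i <;> simp [hf, hg, hh, hconst]
      · intro i; fin_cases i <;> simp [hf, hg, hh, hconst]
      · intro i; fin_cases i <;> simp [pos, pos']
      · intro i
        fin_cases i <;> simp [hprice f hf, hprice g hg, hprice h hh]
      · intro ω
        have := hω ω
        simp [Fin.sum_univ_succ]
        linarith
      · intro ω
        have := hω ω
        simp [Fin.sum_univ_succ]
        linarith
    refine ⟨?_, ?_, ?_, ?_⟩
    · rcases lt_trichotomy (P fun _ => 1) 1 with h | h | h
      · exact (key 1 0 0 _ _ _ (hconst 1) (hconst 1) (hconst 1) (1 - P fun _ => 1)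
          (by linarith) (fun ω => by linarith)).elim
      · exact h
      · exact (key (-1) 0 0 _ _ _ (hconst 1) (hconst 1) (hconst 1) ((P fun _ => 1) - 1)
          (by linarith) (fun ω => by linarith)).elim
    · intro r s f g hf hg
      have hh : r • f + s • g ∈ L := L.add_mem (L.smul_mem r hf) (L.smul_mem s hg)
      rcases lt_trichotomy (P (r • f + s • g)) (r * P f + s * P g) with h | h | h
      · exact (key (-r) (-s) 1 _ _ _ hf hg hh (r * P f + s * P g - P (r • f + s • g))
          (by linarith) (fun ω => by
            have : (r • f + s • g) ω = r * f ω + s * g ω := rfl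
            rw [this]; linarith)).elim
      · exact h
      · exact (key r s (-1) _ _ _ hf hg hh (P (r • f + s • g) - (r * P f + s * P g))
          (by linarith) (fun ω => by
            have : (r • f + s • g) ω = r * f ω + s * g ω := rfl
            rw [this]; linarith)).elim
    · rintro f g hf hg ⟨c, hc, h⟩
      by_contra hn
      exact key 1 (-1) 0 f g f hf hg hf c hc (fun ω => by linarith [h ω])
    · intro f g hf hg
      constructor
      · intro h
        by_contra hn
        push Not at hn
        refine H ⟨3, ![f, fun _ => P f, g], ![g, f, fun _ => P g], ![1, 1, 1],
          by norm_num, ?_, ?_, ?_, ?_, ?_, Or.inr ⟨P g - P f, by linarith, ?_⟩⟩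
        · intro i; fin_cases i <;> simp [hf, hg, hconst]
        · intro i; fin_cases i <;> simp [hf, hg, hconst]
        · intro i; fin_cases i <;> simp
        · intro i; fin_cases i <;> simp [h, hprice f hf, hprice g hg]
        · intro ω
          simp [Fin.sum_univ_succ]
          linarith
        · intro ω
          simp [Fin.sum_univ_succ]
          linarith
      · intro h
        by_contra hn
        have h' := (hcomplete f g hf hg).resolve_left hn
        refine H ⟨3, ![g, f, fun _ => P g], ![f, fun _ => P f, g], ![1, 1, 1],
          by norm_num, ?_, ?_, ?_, ?_, ?_, Or.inl ⟨0, hn⟩⟩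
        · intro i; fin_cases i <;> simp [hf, hg, hconst]
        · intro i; fin_cases i <;> simp [hf, hg, hconst]
        · intro i; fin_cases i <;> simp
        · intro i; fin_cases i <;> simp [h', hprice f hf, hprice g hg]
        · intro ω
          simp [Fin.sum_univ_succ]
          linarith
  · rintro ⟨h1, hlin, hdom, hrep⟩ ⟨n, f, g, c, -, hf, hg, hc, hpref, hle, hor⟩
    have sum : ∀ (f : Fin n → Ω → ℝ), (∀ i, f i ∈ (L : Set (Ω → ℝ))) →
        ∀ s : Finset (Fin n), P (∑ i ∈ s, c i • f i) = ∑ i ∈ s, c i * P (f i) := by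
      intro f hf s
      induction s using Finset.induction_on with
      | empty => simpa using hlin 0 0 0 0 L.zero_mem L.zero_mem
      | insert a s ha ih =>
        rw [Finset.sum_insert ha, Finset.sum_insert ha, ← ih]
        have := hlin (c a) 1 (f a) (∑ i ∈ s, c i • f i) (hf a)
          (L.sum_mem fun i _ => L.smul_mem _ (hf i))
        simpa using this
    have eF : (fun ω => ∑ i, c i * f i ω) = ∑ i, c i • f i := by
      ext ω; simp [Finset.sum_apply]
    have eG : (fun ω => ∑ i, c i * g i ω) = ∑ i, c i • g i := by
      ext ω; simp [Finset.sum_apply]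
    have mF : (fun ω => ∑ i, c i * f i ω) ∈ L := by
      rw [eF]; exact L.sum_mem fun i _ => L.smul_mem _ (hf i)
    have mG : (fun ω => ∑ i, c i * g i ω) ∈ L := by
      rw [eG]; exact L.sum_mem fun i _ => L.smul_mem _ (hg i)
    have pF : P (fun ω => ∑ i, c i * f i ω) = ∑ i, c i * P (f i) := by
      rw [eF]; exact sum f hf _
    have pG : P (fun ω => ∑ i, c i * g i ω) = ∑ i, c i * P (g i) := by
      rw [eG]; exact sum g hg _
    have term : ∀ i, P (g i) ≤ P (f i) := fun i => (hrep _ _ (hf i) (hg i)).1 (hpref i)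
    rcases hor with ⟨k, hk⟩ | hud
    · refine hk ((hrep _ _ (hg k) (hf k)).2 ?_)
      by_contra hn
      have hlt : P (g k) < P (f k) := not_le.1 hn
      have hs : ∑ i, c i * P (g i) < ∑ i, c i * P (f i) :=
        Finset.sum_lt_sum (fun i _ => mul_le_mul_of_nonneg_left (term i) (hc i).le)
          ⟨k, Finset.mem_univ _, mul_lt_mul_of_pos_left hlt (hc k)⟩
      rw [← pF, ← pG] at hs
      set F := (fun ω => ∑ i, c i * f i ω) with hF
      set G := (fun ω => ∑ i, c i * g i ω) with hG
      have e := hlin 1 ((P F - P G) / 2) G (fun _ => 1) mG (hconst 1)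
      have d := hdom ((1:ℝ) • G + ((P F - P G) / 2) • (fun _ => (1:ℝ))) F
        (L.add_mem (by simpa using mG) (L.smul_mem _ (hconst 1))) mF
        ⟨(P F - P G) / 2, by linarith, fun ω => by
          have := hle ω
          simp [hF, hG]
          linarith⟩
      rw [h1] at e
      simp at e d
      linarith
    · have := hdom _ _ mG mF hud
      rw [pF, pG] at this
      have := Finset.sum_le_sum (s := Finset.univ)
        (fun i _ => mul_le_mul_of_nonneg_left (term i) (hc i).le)
      linarith
end

section
/- Let Ω be a nonempty set, let (X, ≿) be a de Finetti coherent comparative prevision system on Ω, and let f be a bounded gamble. Then there exist p ∈ ℝ and a binary relation ≿′ on X ∪ {f, constant gamble p} such that (X ∪ {f, constant gamble p}, ≿′) is a de Finetti coherent comparative prevision system extending (X, ≿) (≿ ⊆ ≿′ and the asymmetric part of ≿ is contained in the asymmetric part of ≿′) with f ∼′ (constant gamble p). -/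
theorem bounded_iff_abs {Ω : Type*} (u : Ω → ℝ) :
    Bounded u ↔ ∃ C : ℝ, ∀ ω, |u ω| ≤ C := by
  constructor
  · rintro ⟨n, h⟩
    exact ⟨n, fun ω => abs_le.2 (h ω)⟩
  · rintro ⟨C, h⟩
    obtain ⟨n, hn⟩ := exists_nat_ge C
    exact ⟨n, fun ω => abs_le.1 ((h ω).trans hn)⟩

/-- The subspace of bounded gambles. -/
def bddSub (Ω : Type*) : Submodule ℝ (Ω → ℝ) where
  carrier := {u | Bounded u}
  zero_mem' := by
    refine (bounded_iff_abs _).2 ⟨0, fun ω => by simp⟩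
  add_mem' := by
    intro a b ha hb
    obtain ⟨C, hC⟩ := (bounded_iff_abs _).1 ha
    obtain ⟨D, hD⟩ := (bounded_iff_abs _).1 hb
    refine (bounded_iff_abs _).2 ⟨C + D, fun ω => ?_⟩
    exact (abs_add_le _ _).trans (add_le_add (hC ω) (hD ω))
  smul_mem' := by
    intro c a ha
    obtain ⟨C, hC⟩ := (bounded_iff_abs _).1 ha
    refine (bounded_iff_abs _).2 ⟨|c| * C, fun ω => ?_⟩
    simp only [Pi.smul_apply, smul_eq_mul, abs_mul]
    exact mul_le_mul_of_nonneg_left (hC ω) (abs_nonneg c)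

theorem bounded_const {Ω : Type*} (c : ℝ) : Bounded (fun _ : Ω => c) :=
  (bounded_iff_abs _).2 ⟨|c|, fun _ => le_rfl⟩

theorem bddSub_bddAbove {Ω : Type*} (u : bddSub Ω) : BddAbove (Set.range (u : Ω → ℝ)) := by
  obtain ⟨C, hC⟩ := (bounded_iff_abs _).1 u.2
  refine ⟨C, ?_⟩
  rintro _ ⟨ω, rfl⟩
  exact (le_abs_self _).trans (hC ω)

theorem exists_prevision {Ω : Type*} [Nonempty Ω] (M : Submodule ℝ (bddSub Ω))
    (hM : ∀ m ∈ M, ¬ ∃ e : ℝ, 0 < e ∧ ∀ ω, (m : Ω → ℝ) ω ≤ -e) :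
    ∃ L : (Ω → ℝ) →ₗ[ℝ] ℝ, (∀ m ∈ M, L (m : Ω → ℝ) = 0) ∧
      ∀ u, Bounded u → ∀ a : ℝ, (∀ ω, u ω ≤ a) → L u ≤ a := by
  obtain ⟨g, hg1, hg2⟩ := exists_extension_of_le_sublinear
    (⟨M, 0⟩ : bddSub Ω →ₗ.[ℝ] ℝ) (fun u => ⨆ ω, (u : Ω → ℝ) ω)
    (by
      intro c hc x
      simp only [Submodule.coe_smul, Pi.smul_apply, smul_eq_mul]
      exact (Real.mul_iSup_of_nonneg hc.le _).symm)
    (by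
      intro x y
      refine ciSup_le fun ω => ?_
      exact add_le_add (le_ciSup (bddSub_bddAbove x) ω) (le_ciSup (bddSub_bddAbove y) ω))
    (by
      rintro ⟨x, hx⟩
      change (0 : ℝ) ≤ ⨆ ω, (x : Ω → ℝ) ω
      by_contra! h
      refine hM x hx ⟨-(⨆ ω, (x : Ω → ℝ) ω), by linarith, fun ω => ?_⟩
      rw [neg_neg]
      exact le_ciSup (bddSub_bddAbove x) ω)
  obtain ⟨L, hL⟩ := LinearMap.exists_extend g
  have hL' : ∀ u : bddSub Ω, L (u : Ω → ℝ) = g u := fun u => by rw [← hL]; rfl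
  refine ⟨L, fun m hm => ?_, fun u hu a ha => ?_⟩
  · rw [hL']; exact hg1 ⟨m, hm⟩
  · have := hL' ⟨u, hu⟩
    simp only at this
    rw [this]
    exact (hg2 _).trans (ciSup_le ha)

/-- Fundamental theorem of prevision (one-off extension): a de Finetti coherent comparative
prevision system can be extended by any bounded gamble `f` together with a fair price for
it. -/
theorem deFinetti_one_off_extension {Ω : Type*} [Nonempty Ω]
    (X : Set (Ω → ℝ))
    (pref : (Ω → ℝ) → (Ω → ℝ) → Prop)
    (hprefX : ∀ f g, pref f g → f ∈ X ∧ g ∈ X)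
    (hCPS : IsComparativePrevisionSystem X pref)
    (hcoh : DeFinettiCoherent X pref)
    (f : Ω → ℝ) (hf : Bounded f) :
    ∃ (p : ℝ) (pref' : (Ω → ℝ) → (Ω → ℝ) → Prop),
      (∀ g h, pref' g h →
        g ∈ X ∪ {f, fun _ => p} ∧ h ∈ X ∪ {f, fun _ => p}) ∧
      IsComparativePrevisionSystem (X ∪ {f, fun _ => p}) pref' ∧
      DeFinettiCoherent (X ∪ {f, fun _ => p}) pref' ∧
      (∀ g h, pref g h → pref' g h) ∧
      (∀ g h, pref g h → ¬ pref h g → ¬ pref' h g) ∧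
      pref' f (fun _ => p) ∧ pref' (fun _ => p) f := by
  obtain ⟨hB, hcomp, hfair⟩ := hCPS
  choose! P hPX hP1 hP2 using hfair
  have hterm : ∀ (a : ℝ) (x : Ω → ℝ), x ∈ X → ∃ (c : ℝ) (u v : Ω → ℝ),
      0 < c ∧ pref u v ∧ ∀ ω, c * v ω - c * u ω = -(a * (x ω - P x)) := by
    intro a x hx
    rcases lt_trichotomy a 0 with h | h | h
    · exact ⟨-a, _, _, by linarith, hP2 x hx, fun ω => by ring⟩
    · exact ⟨1, x, x, one_pos, (hcomp x x hx hx).elim id id, fun ω => by rw [h]; ring⟩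
    · exact ⟨a, _, _, h, hP1 x hx, fun ω => by ring⟩
  let S : Set (bddSub Ω) := {u | ∃ x ∈ X, (u : Ω → ℝ) = x - fun _ => P x}
  obtain ⟨L, hL0, hLle⟩ := exists_prevision (Submodule.span ℝ S) (by
    rintro m hm ⟨e, he, hme⟩
    obtain ⟨n, a, s, hs⟩ := Submodule.mem_span_set'.1 hm
    choose x hxX hx using fun i => (s i).2
    choose c u v hc huv heq using fun i => hterm (a i) (x i) (hxX i)
    have hsum : ∀ ω, (m : Ω → ℝ) ω = ∑ i, a i * (x i ω - P (x i)) := by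
      intro ω
      rw [← hs]
      simp [hx, Finset.sum_apply]
    have key : ∀ ω, (∑ i, c i * v i ω) - ∑ i, c i * u i ω = -(m : Ω → ℝ) ω := by
      intro ω
      rw [hsum, ← Finset.sum_sub_distrib, ← Finset.sum_neg_distrib]
      exact Finset.sum_congr rfl fun i _ => heq i ω
    refine hcoh ⟨n, u, v, c, ?_, fun i => (hprefX _ _ (huv i)).1,
      fun i => (hprefX _ _ (huv i)).2, hc, huv, fun ω => ?_, Or.inr ⟨e, he, fun ω => ?_⟩⟩
    · rcases Nat.eq_zero_or_pos n with h | h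
      · subst h
        obtain ⟨ω⟩ := ‹Nonempty Ω›
        have h1 := hsum ω
        have h2 := hme ω
        simp at h1
        linarith
      · exact h
    · linarith [key ω, hme ω]
    · simp only
      linarith [key ω, hme ω])
  have hconst : ∀ c : ℝ, L (fun _ => c) = c := by
    intro c
    apply le_antisymm
    · exact hLle _ (bounded_const c) _ fun _ => le_rfl
    · have h := hLle _ (bounded_const (-c)) _ fun _ => le_rfl
      have h2 : (fun _ : Ω => -c) = -(fun _ : Ω => c) := rfl
      rw [h2, map_neg] at h
      linarith
  have hLP : ∀ x ∈ X, L x = P x := by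
    intro x hx
    have hb : x - (fun _ => P x) ∈ bddSub Ω :=
      (bddSub Ω).sub_mem (hB x hx) (bounded_const _)
    have h := hL0 ⟨_, hb⟩ (Submodule.subset_span ⟨x, hx, rfl⟩)
    simp only [map_sub, hconst] at h
    linarith
  have hiff : ∀ g ∈ X, ∀ h ∈ X, (pref g h ↔ L h ≤ L g) := by
    intro g hg h hh
    rw [hLP g hg, hLP h hh]
    constructor
    · intro hgh
      by_contra! hlt
      refine hcoh ⟨3, ![g, fun _ => P g, h], ![h, g, fun _ => P h], ![1, 1, 1], by norm_num,
        ?_, ?_, ?_, ?_, ?_, Or.inr ⟨P h - P g, by linarith, ?_⟩⟩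
      · simp [Fin.forall_fin_succ, hg, hh, hPX g hg]
      · simp [Fin.forall_fin_succ, hg, hh, hPX h hh]
      · simp [Fin.forall_fin_succ]
      · simp [Fin.forall_fin_succ, hgh, hP2 g hg, hP1 h hh]
      · intro ω
        simp [Fin.sum_univ_succ]
        linarith
      · intro ω
        simp [Fin.sum_univ_succ]
        linarith
    · intro hle
      by_contra hn
      have hhg : pref h g := (hcomp g h hg hh).resolve_left hn
      refine hcoh ⟨3, ![h, g, fun _ => P h], ![g, fun _ => P g, h], ![1, 1, 1], by norm_num,
        ?_, ?_, ?_, ?_, ?_, Or.inl ⟨0, by simpa using hn⟩⟩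
      · simp [Fin.forall_fin_succ, hg, hh, hPX h hh]
      · simp [Fin.forall_fin_succ, hg, hh, hPX g hg]
      · simp [Fin.forall_fin_succ]
      · simp [Fin.forall_fin_succ, hhg, hP1 g hg, hP2 h hh]
      · intro ω
        simp [Fin.sum_univ_succ]
        linarith
  have hmono : ∀ u v : Ω → ℝ, Bounded u → Bounded v → ∀ e : ℝ, (∀ ω, u ω + e ≤ v ω) →
      L u + e ≤ L v := by
    intro u v hu hv e h
    have := hLle (u - v) ((bddSub Ω).sub_mem hu hv) (-e) (fun ω => by
      have := h ω
      simp only [Pi.sub_apply]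
      linarith)
    rw [map_sub] at this
    linarith
  have hB' : ∀ g ∈ X ∪ {f, fun _ => L f}, Bounded g := by
    rintro g (hg | rfl | rfl)
    · exact hB g hg
    · exact hf
    · exact bounded_const _
  have hfY : f ∈ X ∪ {f, fun _ => L f} := by simp
  have hpY : (fun _ => L f) ∈ X ∪ {f, fun _ => L f} := by simp
  refine ⟨L f, fun g h => g ∈ X ∪ {f, fun _ => L f} ∧ h ∈ X ∪ {f, fun _ => L f} ∧ L h ≤ L g,
    fun g h H => ⟨H.1, H.2.1⟩, ⟨hB', ?_, ?_⟩, ?_, ?_, ?_,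
    ⟨hfY, hpY, (hconst _).le⟩, ⟨hpY, hfY, (hconst _).ge⟩⟩
  · intro g h hg hh
    rcases le_total (L h) (L g) with H | H
    · exact Or.inl ⟨hg, hh, H⟩
    · exact Or.inr ⟨hh, hg, H⟩
  · intro g hg
    have hq : (fun _ => L g) ∈ X ∪ {f, fun _ => L f} := by
      rcases hg with hg | rfl | rfl
      · rw [hLP g hg]; exact Or.inl (hPX g hg)
      · exact hpY
      · rw [hconst]; exact hpY
    exact ⟨L g, hq, ⟨hg, hq, (hconst _).le⟩, ⟨hq, hg, (hconst _).ge⟩⟩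
  · rintro ⟨n, u, v, c, -, hu, hv, hc, huv, hle, hlast⟩
    have hbs : ∀ w : Fin n → Ω → ℝ, (∀ i, w i ∈ X ∪ {f, fun _ => L f}) →
        Bounded (fun ω => ∑ i, c i * w i ω) ∧
        L (fun ω => ∑ i, c i * w i ω) = ∑ i, c i * L (w i) := by
      intro w hw
      have h1 : (fun ω => ∑ i, c i * w i ω) = ∑ i, c i • w i := by
        ext ω; simp [Finset.sum_apply]
      rw [h1]
      refine ⟨?_, by simp⟩
      exact (bddSub Ω).sum_mem fun i _ => (bddSub Ω).smul_mem _ (hB' _ (hw i))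
    obtain ⟨hub, huL⟩ := hbs u hu
    obtain ⟨hvb, hvL⟩ := hbs v hv
    have hterms : ∀ i ∈ Finset.univ, c i * L (v i) ≤ c i * L (u i) := fun i _ =>
      mul_le_mul_of_nonneg_left (huv i).2.2 (hc i).le
    have hge := Finset.sum_le_sum hterms
    rcases hlast with ⟨k, hk⟩ | ⟨e, he, hdom⟩
    · have hlt : L (v k) < L (u k) := by
        by_contra! H
        exact hk ⟨hv k, hu k, H⟩
      have := Finset.sum_lt_sum hterms
        ⟨k, Finset.mem_univ k, mul_lt_mul_of_pos_left hlt (hc k)⟩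
      have h0 := hmono _ _ hub hvb 0 (fun ω => by simpa using hle ω)
      linarith
    · have h0 := hmono _ _ hub hvb e hdom
      linarith
  · intro g h hgh
    obtain ⟨hg, hh⟩ := hprefX _ _ hgh
    exact ⟨Or.inl hg, Or.inl hh, (hiff g hg h hh).1 hgh⟩
  · intro g h hgh hn H
    obtain ⟨hg, hh⟩ := hprefX _ _ hgh
    exact hn ((hiff h hh g hg).2 H.2.2)
end

section
/- Let Ω be a nonempty set, let (X, ≿) be a de Finetti coherent comparative prevision system on Ω with X containing all constant gambles, and let Y be a family of bounded gambles with X ⊆ Y. Then there is a binary relation ≿′ on Y such that (Y, ≿′) is a de Finetti coherent comparative prevision system extending (X, ≿) (≿ ⊆ ≿′ and the asymmetric part of ≿ is contained in the asymmetric part of ≿′). -/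
/-- The submodule of bounded gambles. -/
def bddGambles (Ω : Type*) : Submodule ℝ (Ω → ℝ) where
  carrier := {f | ∃ K : ℝ, ∀ ω, |f ω| ≤ K}
  zero_mem' := ⟨0, fun ω => by simp⟩
  add_mem' := by
    rintro f g ⟨K, hK⟩ ⟨L, hL⟩
    exact ⟨K + L, fun ω => (abs_add_le _ _).trans (add_le_add (hK ω) (hL ω))⟩
  smul_mem' := by
    rintro a f ⟨K, hK⟩
    refine ⟨|a| * K, fun ω => ?_⟩
    simp only [Pi.smul_apply, smul_eq_mul, abs_mul]
    exact mul_le_mul_of_nonneg_left (hK ω) (abs_nonneg a)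

theorem Bounded.mem_bddGambles {Ω : Type*} {f : Ω → ℝ} (h : Bounded f) : f ∈ bddGambles Ω := by
  obtain ⟨n, hn⟩ := h
  exact ⟨n, fun ω => abs_le.2 (hn ω)⟩

/-- Differences of indifferent gambles. -/
def indiffSet {Ω : Type*} (pref : (Ω → ℝ) → (Ω → ℝ) → Prop) : Set (Ω → ℝ) :=
  {u | ∃ f g, pref f g ∧ pref g f ∧ u = f - g}

theorem span_indiff {Ω : Type*} (pref : (Ω → ℝ) → (Ω → ℝ) → Prop) (u : Ω → ℝ)
    (hu : u ∈ Submodule.span ℝ (indiffSet pref)) :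
    ∃ (n : ℕ) (f g : Fin n → Ω → ℝ) (c : Fin n → ℝ), (∀ i, 0 < c i) ∧
      (∀ i, pref (f i) (g i)) ∧ (∀ i, pref (g i) (f i)) ∧
      ∀ ω, u ω = ∑ i, c i * (f i ω - g i ω) := by
  induction hu using Submodule.span_induction with
  | mem u hu =>
    obtain ⟨f, g, h1, h2, rfl⟩ := hu
    exact ⟨1, fun _ => f, fun _ => g, fun _ => 1, by simp, by simp [h1], by simp [h2], by simp⟩
  | zero => exact ⟨0, Fin.elim0, Fin.elim0, Fin.elim0, by simp, by simp, by simp, by simp⟩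
  | add u v _ _ hu hv =>
    obtain ⟨n, f, g, c, h1, h2, h3, h4⟩ := hu
    obtain ⟨m, f', g', c', h1', h2', h3', h4'⟩ := hv
    refine ⟨n + m, Fin.append f f', Fin.append g g', Fin.append c c', ?_, ?_, ?_, ?_⟩
    · intro i; induction i using Fin.addCases <;> simp [h1, h1']
    · intro i; induction i using Fin.addCases <;> simp [h2, h2']
    · intro i; induction i using Fin.addCases <;> simp [h3, h3']
    · intro ω; simp [Fin.sum_univ_add, h4, h4']
  | smul a u _ hu =>
    obtain ⟨n, f, g, c, h1, h2, h3, h4⟩ := hu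
    rcases lt_trichotomy a 0 with ha | rfl | ha
    · refine ⟨n, g, f, fun i => (-a) * c i, fun i => mul_pos (by linarith) (h1 i), h3, h2, ?_⟩
      intro ω
      simp only [Pi.smul_apply, smul_eq_mul, h4, Finset.mul_sum]
      exact Finset.sum_congr rfl fun i _ => by ring
    · exact ⟨0, Fin.elim0, Fin.elim0, Fin.elim0, by simp, by simp, by simp, by simp⟩
    · refine ⟨n, f, g, fun i => a * c i, fun i => mul_pos ha (h1 i), h2, h3, ?_⟩
      intro ω
      simp only [Pi.smul_apply, smul_eq_mul, h4, Finset.mul_sum]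
      exact Finset.sum_congr rfl fun i _ => by ring

theorem span_indiff_le {Ω : Type*} [Nonempty Ω] (X : Set (Ω → ℝ))
    (pref : (Ω → ℝ) → (Ω → ℝ) → Prop)
    (hprefX : ∀ f g, pref f g → f ∈ X ∧ g ∈ X)
    (hcoh : DeFinettiCoherent X pref) (u : Ω → ℝ)
    (hu : u ∈ Submodule.span ℝ (indiffSet pref)) (r : ℝ) (hr : ∀ ω, u ω ≤ r) : 0 ≤ r := by
  by_contra! hneg
  obtain ⟨n, f, g, c, h1, h2, h3, h4⟩ := span_indiff pref u hu
  have key : ∀ ω, (∑ i, c i * f i ω) - ∑ i, c i * g i ω ≤ r := by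
    intro ω
    have := hr ω
    rw [h4] at this
    simpa [mul_sub, Finset.sum_sub_distrib] using this
  refine hcoh ⟨n, f, g, c, ?_, fun i => (hprefX _ _ (h2 i)).1, fun i => (hprefX _ _ (h2 i)).2,
    h1, h2, fun ω => by linarith [key ω], Or.inr ⟨-r, by linarith, fun ω => ?_⟩⟩
  · rcases Nat.eq_zero_or_pos n with rfl | h
    · have := key (Classical.arbitrary Ω)
      simp at this
      linarith
    · exact h
  · have := key ω
    simp only
    linarith

/-- The cone of bounded gambles dominating a combination of indifference differences. -/
def domCone {Ω : Type*} (pref : (Ω → ℝ) → (Ω → ℝ) → Prop) : PointedCone ℝ (bddGambles Ω) where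
  zero_mem' := ⟨0, Submodule.zero_mem _, fun _ => le_rfl⟩
  carrier := {h | ∃ u ∈ Submodule.span ℝ (indiffSet pref), ∀ ω, u ω ≤ (h : Ω → ℝ) ω}
  smul_mem' := by
    rintro a h ⟨u, hu, hle⟩
    exact ⟨(a : ℝ) • u, Submodule.smul_mem _ _ hu,
      fun ω => mul_le_mul_of_nonneg_left (hle ω) a.2⟩
  add_mem' := by
    rintro h k ⟨u, hu, hle⟩ ⟨v, hv, hle'⟩
    exact ⟨u + v, Submodule.add_mem _ hu hv, fun ω => add_le_add (hle ω) (hle' ω)⟩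

theorem exists_functional {Ω : Type*} [Nonempty Ω] (X : Set (Ω → ℝ))
    (pref : (Ω → ℝ) → (Ω → ℝ) → Prop)
    (hprefX : ∀ f g, pref f g → f ∈ X ∧ g ∈ X)
    (hbdd : ∀ f ∈ X, Bounded f)
    (hcoh : DeFinettiCoherent X pref) :
    ∃ M : (Ω → ℝ) →ₗ[ℝ] ℝ, (∀ r : ℝ, M (fun _ => r) = r) ∧
      (∀ f ∈ bddGambles Ω, (∀ ω, 0 ≤ f ω) → 0 ≤ M f) ∧
      ∀ f g, pref f g → pref g f → M f = M g := by
  let one : bddGambles Ω := ⟨fun _ => 1, 1, fun ω => by simp⟩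
  have hone : one ≠ 0 := by
    intro h
    have := congrFun (congrArg Subtype.val h) (Classical.arbitrary Ω)
    simp [one] at this
  let F : bddGambles Ω →ₗ.[ℝ] ℝ := LinearPMap.mkSpanSingleton one (1 : ℝ) hone
  have hmem : ∀ r : ℝ, r • one ∈ F.domain := fun r =>
    Submodule.smul_mem _ _ (Submodule.mem_span_singleton_self one)
  have hF : ∀ (r : ℝ) (h : r • one ∈ F.domain), F ⟨r • one, h⟩ = r := by
    intro r h
    have := LinearPMap.mkSpanSingleton'_apply (R := ℝ) one (1 : ℝ)
      (fun c hc => by simpa [hone] using hc) r h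
    rw [smul_eq_mul, mul_one] at this
    exact this
  obtain ⟨g, hg1, hg2⟩ := riesz_extension (domCone pref) F (by
      rintro ⟨x, hx⟩ hxs
      obtain ⟨r, rfl⟩ := Submodule.mem_span_singleton.1 hx
      rw [hF]
      obtain ⟨u, hu, hle⟩ := hxs
      exact span_indiff_le X pref hprefX hcoh u hu r fun ω => by simpa [one] using hle ω) (by
      rintro ⟨y, K, hK⟩
      refine ⟨⟨K • one, hmem K⟩, 0, Submodule.zero_mem _, fun ω => ?_⟩
      have := neg_le_of_abs_le (hK ω)
      simp [one]
      linarith)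
  obtain ⟨M, hM⟩ := LinearMap.exists_extend g
  have hM' : ∀ f (hf : f ∈ bddGambles Ω), M f = g ⟨f, hf⟩ := fun f hf =>
    LinearMap.congr_fun hM ⟨f, hf⟩
  refine ⟨M, fun r => ?_, fun f hf h0 => ?_, ?_⟩
  · have h1 := hg1 ⟨r • one, hmem r⟩
    rw [hF] at h1
    rw [hM' _ (⟨|r|, fun _ => le_rfl⟩)]
    refine Eq.trans ?_ h1
    congr 1
    ext ω
    simp [one]
  · rw [hM' f hf]
    exact hg2 _ ⟨0, Submodule.zero_mem _, h0⟩
  · have key : ∀ f g, pref f g → pref g f → M g ≤ M f := by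
      intro a b h1 h2
      have hb : a - b ∈ bddGambles Ω := Submodule.sub_mem _
        (hbdd _ (hprefX _ _ h1).1).mem_bddGambles (hbdd _ (hprefX _ _ h1).2).mem_bddGambles
      have := hg2 ⟨a - b, hb⟩ ⟨a - b, Submodule.subset_span ⟨a, b, h1, h2, rfl⟩, fun _ => le_rfl⟩
      rw [← hM', map_sub] at this
      linarith
    exact fun a b h1 h2 => le_antisymm (key b a h2 h1) (key a b h1 h2)

/-- A de Finetti coherent comparative prevision system containing all constant gambles
extends to a de Finetti coherent comparative prevision system on any larger family of
bounded gambles. -/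
theorem deFinetti_coherent_extension {Ω : Type*} [Nonempty Ω]
    (X Y : Set (Ω → ℝ))
    (pref : (Ω → ℝ) → (Ω → ℝ) → Prop)
    (hprefX : ∀ f g, pref f g → f ∈ X ∧ g ∈ X)
    (hconst : ∀ c : ℝ, (fun _ => c) ∈ X)
    (hCPS : IsComparativePrevisionSystem X pref)
    (hcoh : DeFinettiCoherent X pref)
    (hXY : X ⊆ Y) (hYbdd : ∀ f ∈ Y, Bounded f) :
    ∃ pref' : (Ω → ℝ) → (Ω → ℝ) → Prop,
      (∀ f g, pref' f g → f ∈ Y ∧ g ∈ Y) ∧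
      IsComparativePrevisionSystem Y pref' ∧
      DeFinettiCoherent Y pref' ∧
      (∀ f g, pref f g → pref' f g) ∧
      (∀ f g, pref f g → ¬ pref g f → ¬ pref' g f) := by
  obtain ⟨hbdd, hcomp, hpr⟩ := hCPS
  obtain ⟨M, hMc, hMpos, hMeq⟩ := exists_functional X pref hprefX hbdd hcoh
  have hrep : ∀ f ∈ X, pref f (fun _ => M f) ∧ pref (fun _ => M f) f := by
    intro f hf
    obtain ⟨p, -, h1, h2⟩ := hpr f hf
    have := hMeq _ _ h1 h2
    rw [hMc] at this
    rw [this]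
    exact ⟨h1, h2⟩
  -- the three-term Dutch book
  have book : ∀ f g, pref f g → M f ≤ M g → pref g f ∧ ¬ M f < M g := by
    intro f g hfg hle
    obtain ⟨hf, hg⟩ := hprefX _ _ hfg
    by_contra hcon
    refine hcoh ⟨3, ![f, g, fun _ => M f], ![g, fun _ => M g, f], fun _ => 1, by norm_num,
      ?_, ?_, by simp, ?_, ?_, ?_⟩
    · intro i; fin_cases i <;> simp [hf, hg, hconst]
    · intro i; fin_cases i <;> simp [hf, hg, hconst]
    · intro i; fin_cases i
      · exact hfg
      · exact (hrep g hg).1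
      · exact (hrep f hf).2
    · intro ω; simp [Fin.sum_univ_three]; linarith
    · by_cases h : pref g f
      · right
        have hlt : M f < M g := by
          by_contra hn
          exact hcon ⟨h, hn⟩
        refine ⟨M g - M f, by linarith, fun ω => ?_⟩
        simp [Fin.sum_univ_three]; linarith
      · exact Or.inl ⟨0, h⟩
  have hmono : ∀ f g, pref f g → M g ≤ M f := by
    intro f g h
    by_contra! hlt
    exact (book f g h hlt.le).2 hlt
  refine ⟨fun f g => f ∈ Y ∧ g ∈ Y ∧ M g ≤ M f, fun f g h => ⟨h.1, h.2.1⟩,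
    ⟨hYbdd, ?_, ?_⟩, ?_, ?_, ?_⟩
  · intro f g hf hg
    rcases le_total (M g) (M f) with h | h
    · exact Or.inl ⟨hf, hg, h⟩
    · exact Or.inr ⟨hg, hf, h⟩
  · intro f hf
    exact ⟨M f, hXY (hconst _), ⟨hf, hXY (hconst _), (hMc _).le⟩,
      ⟨hXY (hconst _), hf, (hMc _).ge⟩⟩
  · rintro ⟨n, f, g, c, -, hf, hg, hc, hp, hle, hlast⟩
    let D : Ω → ℝ := ∑ i, c i • (g i - f i)
    have hD : D ∈ bddGambles Ω := Submodule.sum_mem _ fun i _ => Submodule.smul_mem _ _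
      (Submodule.sub_mem _ (hYbdd _ (hg i)).mem_bddGambles (hYbdd _ (hf i)).mem_bddGambles)
    have hDω : ∀ ω, D ω = (∑ i, c i * g i ω) - ∑ i, c i * f i ω := by
      intro ω
      simp [D, Finset.sum_apply, mul_sub, Finset.sum_sub_distrib]
    have hMD : M D = ∑ i, c i * (M (g i) - M (f i)) := by
      simp [D, map_sum]
    have hterm : ∀ i ∈ Finset.univ, c i * (M (g i) - M (f i)) ≤ 0 := fun i _ =>
      mul_nonpos_of_nonneg_of_nonpos (hc i).le (by linarith [(hp i).2.2])
    have hnp : M D ≤ 0 := hMD ▸ Finset.sum_nonpos hterm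
    have hnn : 0 ≤ M D := hMpos D hD fun ω => by rw [hDω]; linarith [hle ω]
    rcases hlast with ⟨k, hk⟩ | ⟨e, he, hdom⟩
    · have h0 := (Finset.sum_eq_zero_iff_of_nonpos hterm).1 (hMD ▸ le_antisymm hnp hnn) k
        (Finset.mem_univ k)
      rcases mul_eq_zero.1 h0 with h | h
      · exact (hc k).ne' h
      · exact hk ⟨hg k, hf k, by linarith⟩
    · have := hMpos (D - fun _ => e) (Submodule.sub_mem _ hD ⟨|e|, fun _ => le_rfl⟩) fun ω => by
        have := hdom ω
        simp only at this
        simp only [Pi.sub_apply, hDω]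
        linarith
      rw [map_sub, hMc] at this
      linarith
  · intro f g h
    exact ⟨hXY (hprefX _ _ h).1, hXY (hprefX _ _ h).2, hmono _ _ h⟩
  · intro f g h hn h'
    exact hn (book f g h h'.2.2).1
end
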